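/- Let u: [0,∞) → (0,∞) be continuous, strictly increasing to ∞ (hence invertible) with u(x)/u(⌊x⌋) → 1 as x → ∞, and let p, q, s be real sequences. If for every λ ∈ (1,∞) the moving average c_n(λ) := (1/u(n))·∑_{w_λ(n) < k ≤ n} (p∘qs)_k converges to (1 − λ⁻¹)·s as n → ∞, then this convergence is uniform in λ on every compact subset of (1,∞). -/

import Mathlib

open Filter Finset Topology

/-- The Voronoi convolution `(a∘b)` of two sequences. -/
noncomputable def vconv (a b : ℕ → ℝ) : ℕ → ℝ
  | 0 => a 0 * b 0
  | n + 1 => (∑ k ∈ Finset.range (n + 2), a (n + 1 - k) * b k)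
      - ∑ k ∈ Finset.range (n + 1), a (n - k) * b k

/-- `w_λ(x) = u⁻¹(u(x)/λ)`, the inverse taken on `[0,∞)`. -/
noncomputable def wl (u : ℝ → ℝ) (lam x : ℝ) : ℝ :=
  Function.invFunOn u (Set.Ici 0) (u x / lam)

/-- The Voronoi moving average `c_x = (1/u(x)) ∑_{w_λ(x) < k ≤ x} a_k`. -/
noncomputable def movAvg (u : ℝ → ℝ) (a : ℕ → ℝ) (lam x : ℝ) : ℝ :=
  (1 / u x) * ∑ k ∈ Finset.range (⌊x⌋₊ + 1),
    if wl u lam x < (k : ℝ) then a k else 0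

/-- auxiliary moving average in terms of the values `y n = u n`. -/
noncomputable def cAux (y a : ℕ → ℝ) (n : ℕ) (lam : ℝ) : ℝ :=
  (1 / y n) * ∑ k ∈ Finset.range (n + 1), if y n / lam < y k then a k else 0

lemma cAux_measurable (y a : ℕ → ℝ) (n : ℕ) : Measurable (cAux y a n) := by
  unfold cAux
  refine Measurable.const_mul (Finset.measurable_fun_sum _ fun k _ => ?_) _
  refine Measurable.ite ?_ measurable_const measurable_const
  exact measurableSet_lt (by fun_prop) measurable_const

lemma sum_split (y a : ℕ → ℝ) (hy : StrictMono y) (m n : ℕ) (hmn : m ≤ n) (t : ℝ)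
    (ht : t < y (m + 1)) :
    ∑ k ∈ Finset.range (n + 1), (if t < y k then a k else 0)
      = ∑ k ∈ Finset.range (m + 1), (if t < y k then a k else 0)
        + ∑ k ∈ Finset.Ico (m + 1) (n + 1), a k := by
  rw [← Finset.sum_range_add_sum_Ico _ (show m + 1 ≤ n + 1 by omega)]
  congr 1
  refine Finset.sum_congr rfl fun k hk => ?_
  rw [Finset.mem_Ico] at hk
  rw [if_pos (ht.trans_le (hy.monotone hk.1))]

lemma cAux_identity (y a : ℕ → ℝ) (hy : StrictMono y) (hpos : ∀ n, 0 < y n) (m n : ℕ)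
    (hmn : m ≤ n) (lam nu : ℝ) (hnu : 1 ≤ nu) (h1 : y m ≤ y n / lam)
    (h2 : y n / lam < y (m + 1)) :
    cAux y a n lam = cAux y a n (y n / y m * nu) - cAux y a m nu / (y n / y m) := by
  have hm := hpos m
  have hn := hpos n
  have e : y n / (y n / y m * nu) = y m / nu := by
    field_simp
  unfold cAux
  rw [e, sum_split y a hy m n hmn _ h2, sum_split y a hy m n hmn (y m / nu)]
  · have : ∑ k ∈ Finset.range (m + 1), (if y n / lam < y k then a k else 0) = 0 := by
      refine Finset.sum_eq_zero fun k hk => ?_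
      rw [Finset.mem_range] at hk
      rw [if_neg]
      have := hy.monotone (show k ≤ m by omega)
      linarith
    rw [this]
    field_simp
    ring
  · exact (div_le_self hm.le hnu).trans_lt (hy (Nat.lt_succ_self m))

open MeasureTheory in
lemma bad_small (y a : ℕ → ℝ) (s : ℝ)
    (hc : ∀ lam : ℝ, 1 < lam → Tendsto (fun n => cAux y a n lam) atTop (𝓝 ((1 - lam⁻¹) * s)))
    (C : ℝ) (ε : ℝ) (hε : 0 < ε) :
    ∀ᶠ n in atTop, volume ({x : ℝ | ε ≤ dist (cAux y a n x) ((1 - x⁻¹) * s)} ∩ Set.Icc 2 C)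
      < ENNReal.ofReal (1 / 2) := by
  have hm : TendstoInMeasure (volume.restrict (Set.Icc (2 : ℝ) C)) (fun n => cAux y a n) atTop
      (fun x => (1 - x⁻¹) * s) := by
    refine tendstoInMeasure_of_tendsto_ae
      (fun n => (cAux_measurable y a n).aestronglyMeasurable) ?_
    refine (ae_restrict_iff' measurableSet_Icc).2 (Eventually.of_forall fun x hx => ?_)
    exact hc x (by linarith [hx.1])
  rw [tendstoInMeasure_iff_dist] at hm
  have h := (hm ε hε).eventually_lt_const
    (show (0 : ENNReal) < ENNReal.ofReal (1 / 2) by simp)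
  filter_upwards [h] with n hn
  rwa [Measure.restrict_apply' measurableSet_Icc] at hn

open MeasureTheory in
lemma exists_good (F G : Set ℝ) (r : ℝ) (hr : 1 ≤ r)
    (hF : volume F < ENNReal.ofReal (1 / 2)) (hG : volume G < ENNReal.ofReal (1 / 2)) :
    ∃ nu ∈ Set.Icc (2 : ℝ) 3, nu ∉ F ∧ r * nu ∉ G := by
  by_contra! hcon
  have hsub : Set.Icc (2 : ℝ) 3 ⊆ F ∪ (fun x => r * x) ⁻¹' G := by
    intro x hx
    by_cases hxF : x ∈ F
    · exact Or.inl hxF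
    · exact Or.inr (hcon x hx hxF)
  have h1 : volume ((fun x => r * x) ⁻¹' G) ≤ volume G := by
    rw [Real.volume_preimage_mul_left (by positivity)]
    refine mul_le_of_le_one_left (by positivity) ?_
    rw [ENNReal.ofReal_le_one, abs_of_nonneg (by positivity)]
    exact inv_le_one_of_one_le₀ hr
  have h2 := (measure_mono hsub).trans (measure_union_le (μ := volume) _ _)
  have h3 : volume F + volume ((fun x => r * x) ⁻¹' G) < 
      ENNReal.ofReal (1 / 2) + ENNReal.ofReal (1 / 2) :=
    ENNReal.add_lt_add hF (h1.trans_lt hG)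
  rw [Real.volume_Icc] at h2
  have h4 := h2.trans_lt h3
  rw [← ENNReal.ofReal_add (by norm_num) (by norm_num)] at h4
  norm_num at h4

lemma core (y a : ℕ → ℝ) (s : ℝ) (hy : StrictMono y) (hpos : ∀ n, 0 < y n)
    (htop : Tendsto y atTop atTop)
    (hr : ∀ δ > (0 : ℝ), ∀ᶠ n in atTop, y (n + 1) ≤ (1 + δ) * y n)
    (hc : ∀ lam : ℝ, 1 < lam → Tendsto (fun n => cAux y a n lam) atTop (𝓝 ((1 - lam⁻¹) * s)))
    (B : ℝ) (hB : 1 ≤ B) (ε : ℝ) (hε : 0 < ε) :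
    ∀ᶠ n in atTop, ∀ lam : ℝ, 1 ≤ lam → lam ≤ B →
      dist ((1 - lam⁻¹) * s) (cAux y a n lam) < ε := by
  obtain ⟨δ, hδ, hδ1, hδs⟩ : ∃ δ > (0 : ℝ), δ ≤ 1 ∧ δ * |s| ≤ ε / 4 := by
    refine ⟨min 1 (ε / 4 / (|s| + 1)), by positivity, min_le_left _ _, ?_⟩
    have h0 := abs_nonneg s
    calc _ ≤ ε / 4 / (|s| + 1) * |s| := by gcongr; exact min_le_right _ _
      _ ≤ ε / 4 / (|s| + 1) * (|s| + 1) := by gcongr; linarith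
      _ = ε / 4 := by field_simp
  obtain ⟨M, hM⟩ := eventually_atTop.1
    ((bad_small y a s hc (6 * B) (ε / 4) (by positivity)).and (hr δ hδ))
  filter_upwards [eventually_ge_atTop M, htop.eventually_ge_atTop (B * y M)] with n hnM hnB
  intro lam hl1 hlB
  have hlpos : 0 < lam := by linarith
  have hn := hpos n
  have hex : ∃ k, y n / lam < y k :=
    ⟨n + 1, (div_le_self hn.le hl1).trans_lt (hy (Nat.lt_succ_self n))⟩
  have hyM : y M ≤ y n / lam := by
    rw [le_div_iff₀ hlpos]
    have := hpos M
    nlinarith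
  obtain ⟨m, hMm, h1, h2⟩ : ∃ m, M ≤ m ∧ y m ≤ y n / lam ∧ y n / lam < y (m + 1) := by
    classical
    have hk := Nat.find_spec hex
    have hmin := fun j => Nat.find_min hex (m := j)
    set k := Nat.find hex
    have hMk : M < k := by
      rw [← hy.lt_iff_lt]
      linarith
    refine ⟨k - 1, by omega, ?_, ?_⟩
    · exact not_lt.1 (hmin (k - 1) (by omega))
    · rwa [Nat.sub_add_cancel (by omega)]
  have hmn : m ≤ n := by
    rw [← hy.le_iff_le]
    exact h1.trans (div_le_self hn.le hl1)
  have hm := hpos m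
  have hrl : lam ≤ y n / y m := by
    rw [le_div_iff₀ hm]
    rw [le_div_iff₀ hlpos] at h1
    linarith
  have hry : y n / y m ≤ (1 + δ) * lam := by
    rw [div_le_iff₀ hm]
    rw [div_lt_iff₀ hlpos] at h2
    have := (hM m hMm).2
    nlinarith
  obtain ⟨nu, ⟨hnu2, hnu3⟩, hF, hG⟩ := exists_good _ _ (y n / y m) (hl1.trans hrl)
    (hM m hMm).1 (hM n hnM).1
  rw [cAux_identity y a hy hpos m n hmn lam nu (by linarith) h1 h2]
  set r := y n / y m with hrdef
  have hr1 : 1 ≤ r := hl1.trans hrl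
  have hrB : r ≤ 2 * B := by nlinarith
  have e1 : |cAux y a m nu - (1 - nu⁻¹) * s| < ε / 4 := by
    by_contra! h
    exact hF ⟨h, hnu2, by linarith⟩
  have e2 : |cAux y a n (r * nu) - (1 - (r * nu)⁻¹) * s| < ε / 4 := by
    by_contra! h
    exact hG ⟨h, by nlinarith, by nlinarith⟩
  have hrpos : 0 < r := by linarith
  have e3 : |(cAux y a m nu - (1 - nu⁻¹) * s) / r| < ε / 4 := by
    rw [abs_div, abs_of_pos hrpos]
    exact (div_le_self (abs_nonneg _) hr1).trans_lt e1
  have e4 : |(lam⁻¹ - r⁻¹) * s| ≤ ε / 4 := by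
    rw [abs_mul]
    have h5 : r⁻¹ ≤ lam⁻¹ := inv_anti₀ hlpos hrl
    have h6 : lam⁻¹ - r⁻¹ ≤ δ := by
      have : lam⁻¹ - r⁻¹ = (r - lam) / (lam * r) := by field_simp
      rw [this, div_le_iff₀ (by positivity)]
      have : lam ≤ lam * r := by nlinarith
      nlinarith
    rw [abs_of_nonneg (by linarith)]
    exact (mul_le_mul_of_nonneg_right h6 (abs_nonneg s)).trans hδs
  have key : (1 - lam⁻¹) * s - (cAux y a n (r * nu) - cAux y a m nu / r)
      = -(lam⁻¹ - r⁻¹) * s - (cAux y a n (r * nu) - (1 - (r * nu)⁻¹) * s)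
        + (cAux y a m nu - (1 - nu⁻¹) * s) / r := by
    have : nu ≠ 0 := by positivity
    field_simp
    ring
  rw [Real.dist_eq, key]
  rw [abs_lt] at *
  rw [abs_le] at e4
  constructor <;> linarith [e2.1, e2.2, e3.1, e3.2, e4.1, e4.2]

lemma movAvg_eq (u : ℝ → ℝ) (a : ℕ → ℝ)
    (hcont : ContinuousOn u (Set.Ici 0))
    (hmono : StrictMonoOn u (Set.Ici 0))
    (htop : Tendsto u atTop atTop) (n : ℕ) (lam : ℝ) (h : u 0 ≤ u n / lam) :
    movAvg u a lam n = cAux (fun k => u k) a n lam := by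
  have hmem : ∃ x ∈ Set.Ici (0 : ℝ), u x = u n / lam := by
    obtain ⟨b, hb, hb0⟩ := ((htop.eventually_ge_atTop (u n / lam)).and
      (eventually_ge_atTop (0 : ℝ))).exists
    obtain ⟨x, hx, hxe⟩ := intermediate_value_Icc hb0
      (hcont.mono Set.Icc_subset_Ici_self) ⟨h, hb⟩
    exact ⟨x, hx.1, hxe⟩
  have hw0 : wl u lam n ∈ Set.Ici (0 : ℝ) := Function.invFunOn_mem hmem
  have hwe : u (wl u lam n) = u n / lam := Function.invFunOn_eq hmem
  unfold movAvg cAux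
  rw [Nat.floor_natCast]
  congr 1
  refine Finset.sum_congr rfl fun k _ => ?_
  have : wl u lam n < k ↔ u n / lam < u k := by
    rw [← hwe]
    exact (hmono.lt_iff_lt hw0 (Set.mem_Ici.2 (Nat.cast_nonneg k))).symm
  simp only [this]

lemma ratio_step (u : ℝ → ℝ)
    (hpos : ∀ x ≥ (0 : ℝ), 0 < u x)
    (hcont : ContinuousOn u (Set.Ici 0))
    (hfloor : Tendsto (fun x : ℝ => u x / u (⌊x⌋₊ : ℝ)) atTop (𝓝 1))
    (δ : ℝ) (hδ : 0 < δ) :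
    ∀ᶠ n : ℕ in atTop, u ((n + 1 : ℕ) : ℝ) ≤ (1 + δ) * u n := by
  obtain ⟨X, hX⟩ := eventually_atTop.1 (hfloor.eventually_le_const (show (1 : ℝ) < 1 + δ by linarith))
  filter_upwards [eventually_ge_atTop ⌈X⌉₊] with n hn
  have hXn : X ≤ n := Nat.ceil_le.1 hn
  have hn0 : (0 : ℝ) ≤ n := Nat.cast_nonneg n
  have hc : Tendsto u (𝓝[<] ((n + 1 : ℕ) : ℝ)) (𝓝 (u ((n + 1 : ℕ) : ℝ))) := by
    refine (hcont.continuousAt (Ici_mem_nhds ?_)).tendsto.mono_left nhdsWithin_le_nhds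
    push_cast; linarith
  refine le_of_tendsto hc ?_
  have hlt : (n : ℝ) < ((n + 1 : ℕ) : ℝ) := by push_cast; linarith
  filter_upwards [Ioo_mem_nhdsLT hlt] with x hx
  have hfl : ⌊x⌋₊ = n := by
    rw [Nat.floor_eq_iff (by linarith [hx.1])]
    have := hx.2
    push_cast at this
    exact ⟨hx.1.le, this⟩
  have := hX x (by linarith [hx.1])
  rw [hfl, div_le_iff₀ (hpos _ hn0)] at this
  exact this

/-- Theorem 6: if the moving-average convergence holds for every
`λ ∈ (1,∞)`, then it holds uniformly on compact `λ`-subsets of `(1,∞)`. -/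
theorem movingAverage_uniform_on_compacts (u : ℝ → ℝ) (p q s : ℕ → ℝ) (sVal : ℝ)
    (hpos : ∀ x ≥ (0 : ℝ), 0 < u x)
    (hcont : ContinuousOn u (Set.Ici 0))
    (hmono : StrictMonoOn u (Set.Ici 0))
    (htop : Tendsto u atTop atTop)
    (hfloor : Tendsto (fun x : ℝ => u x / u (⌊x⌋₊ : ℝ)) atTop (𝓝 1))
    (hall : ∀ lam : ℝ, 1 < lam →
      Tendsto (fun n : ℕ => movAvg u (vconv p (fun k => q k * s k)) lam n)
        atTop (𝓝 ((1 - lam⁻¹) * sVal))) :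
    ∀ K : Set ℝ, K ⊆ Set.Ioi 1 → IsCompact K →
      TendstoUniformlyOn
        (fun (n : ℕ) (lam : ℝ) => movAvg u (vconv p (fun k => q k * s k)) lam n)
        (fun lam => (1 - lam⁻¹) * sVal) atTop K := by
  intro K hK hKc
  set a := vconv p (fun k => q k * s k) with ha
  have hy : StrictMono (fun k : ℕ => u k) := fun i j hij =>
    hmono (Set.mem_Ici.2 (Nat.cast_nonneg i)) (Set.mem_Ici.2 (Nat.cast_nonneg j))
      (Nat.cast_lt.2 hij)
  have hyt : Tendsto (fun k : ℕ => u k) atTop atTop := htop.comp tendsto_natCast_atTop_atTop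
  have hev : ∀ B : ℝ, ∀ᶠ n : ℕ in atTop, ∀ lam : ℝ, 1 < lam → lam ≤ B →
      movAvg u a lam n = cAux (fun k => u k) a n lam := by
    intro B
    filter_upwards [hyt.eventually_ge_atTop (B * u 0)] with n hn lam h1 h2
    refine movAvg_eq u a hcont hmono htop n lam ?_
    rw [le_div_iff₀ (by linarith)]
    have := hpos 0 le_rfl
    nlinarith
  have hc : ∀ lam : ℝ, 1 < lam →
      Tendsto (fun n => cAux (fun k => u k) a n lam) atTop (𝓝 ((1 - lam⁻¹) * sVal)) := by
    intro lam hl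
    refine (hall lam hl).congr' ?_
    filter_upwards [hev lam] with n hn
    exact hn lam hl le_rfl
  obtain ⟨B, hB⟩ := hKc.bddAbove
  rw [Metric.tendstoUniformlyOn_iff]
  intro ε hε
  filter_upwards [hev (max B 1), core (fun k => u k) a sVal hy
    (fun n => hpos _ (Nat.cast_nonneg n)) hyt
    (fun δ hδ => ratio_step u hpos hcont hfloor δ hδ) hc (max B 1) (le_max_right _ _) ε hε]
    with n h1 h2 lam hlam
  have hl1 : 1 < lam := hK hlam
  have hl2 : lam ≤ max B 1 := (hB hlam).trans (le_max_left _ _)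
  rw [h1 lam hl1 hl2]
  exact h2 lam hl1.le hl2
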